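/- arXiv:solv-int/9907001 — 2 statements merged into one kernel-verified Lean document; each statement's English description precedes it below -/
import Mathlib

section
/- Let a > −1 be real and let N ≥ 1 be a natural number. Define q̃_{2m+1}(x) = p_{2m+1}(x), q̃_{2m}(x) = 2^{2m} m! Γ(a/2+m+1) Σ_{j=0}^{m} p_{2j}(x)/(2^{2j} j! Γ(a/2+j+1)), and r̃_m = (1/2)·(2m+1)!·Γ(a+2m+2), where p_k are the monic Laguerre polynomials with parameter a. Define S̃₄(x,y) = Σ_{m=0}^{N−1} (x^{(a+1)/2} e^{−x/2}/(2r̃_m))·(q̃_{2m}(x)·(d/dy)[y^{(a+1)/2} e^{−y/2} q̃_{2m+1}(y)] − q̃_{2m+1}(x)·(d/dy)[y^{(a+1)/2} e^{−y/2} q̃_{2m}(y)]). Then for all x, y > 0: S̃₄(x,y) = (1/2)·x^{(a+1)/2} y^{(a−1)/2} e^{−(x+y)/2} Σ_{l=0}^{2N−1} p_l(x)p_l(y)/(l!·Γ(a+l+1)) − (1/(4·(2N−1)!·Γ(a+2N)))·y^{(a−1)/2} e^{−y/2}·p_{2N}(y)·∫_x^{∞} t^{(a−1)/2} e^{−t/2}·p_{2N−1}(t)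 dt. -/
/-!
Write `h_k = k! Γ(k+a+1)` and `w_s(x) = x^s e^{-x/2}`. Averaging the lowering relation
`x p_k' = k p_k + k(k+a) p_{k-1}` and the raising relation
`p_{k+1} = (x - k - a - 1) p_k - x p_k'` gives
`(w_{(a+1)/2} p_k)' = ½ w_{(a-1)/2} (k(k+a) p_{k-1} - p_{k+1})`.
The even skew-orthogonal polynomials satisfy `q̃_{2m} = p_{2m} + 2m(2m+a) q̃_{2m-2}`, so that
`(w_{(a+1)/2} q̃_{2m})'` collapses to `-½ w_{(a-1)/2} p_{2m+1}`. In the kernel, since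
`h_k = k(k+a) h_{k-1}`, the terms with `q̃` telescope, leaving the Christoffel–Darboux sum and the
single term `q̃_{2N-2}(x) p_{2N}(y) / h_{2N-1}`, in which integrating the collapsed derivative
turns `q̃_{2N-2}(x)` into the tail integral of `w_{(a-1)/2} p_{2N-1}`.
-/

open MeasureTheory Finset

/-- The generalized Laguerre polynomial `L_n^a`. -/
noncomputable def laguerreL (a : ℝ) (n : ℕ) (x : ℝ) : ℝ :=
  ∑ k ∈ range (n + 1),
    (-1) ^ k * (Real.Gamma ((n : ℝ) + a + 1) /
      (Real.Gamma ((k : ℝ) + a + 1) * (Nat.factorial k) * (Nat.factorial (n - k)))) * x ^ k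

/-- The monic Laguerre polynomials `p_k = (−1)^k k! L_k^a`. -/
noncomputable def laguerreP (a : ℝ) (k : ℕ) (x : ℝ) : ℝ :=
  (-1) ^ k * (Nat.factorial k) * laguerreL a k x

/-- `q̃_{2m+1} = p_{2m+1}`, `q̃_{2m} = 2^{2m} m! Γ(a/2+m+1) Σ_j p_{2j}/(2^{2j} j! Γ(a/2+j+1))`. -/
noncomputable def qLSE (a : ℝ) (j : ℕ) (x : ℝ) : ℝ :=
  if j % 2 = 1 then laguerreP a j x
  else 2 ^ j * (Nat.factorial (j / 2)) * Real.Gamma (a / 2 + (j / 2 : ℕ) + 1) *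
    ∑ i ∈ range (j / 2 + 1),
      laguerreP a (2 * i) x /
        (2 ^ (2 * i) * (Nat.factorial i) * Real.Gamma (a / 2 + (i : ℝ) + 1))

/-- The normalizations `r̃_m = (1/2)(2m+1)! Γ(a+2m+2)`. -/
noncomputable def rLSE (a : ℝ) (m : ℕ) : ℝ :=
  (1 / 2) * (Nat.factorial (2 * m + 1)) * Real.Gamma (a + 2 * (m : ℝ) + 2)

/-- The Laguerre symplectic ensemble kernel `S̃₄(x,y)`. -/
noncomputable def S4LSE (a : ℝ) (N : ℕ) (x y : ℝ) : ℝ :=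
  ∑ m ∈ range N, ((x ^ ((a + 1) / 2) * Real.exp (-x / 2)) / (2 * rLSE a m)) *
    (qLSE a (2 * m) x *
        deriv (fun t => t ^ ((a + 1) / 2) * Real.exp (-t / 2) * qLSE a (2 * m + 1) t) y -
     qLSE a (2 * m + 1) x *
        deriv (fun t => t ^ ((a + 1) / 2) * Real.exp (-t / 2) * qLSE a (2 * m) t) y)

section Laguerre

variable {a : ℝ}

/-- The constants `h_k = k! Γ(k+a+1)`; for `a > -1`, `h_k` is the squared norm of `p_k` in
`L²((0, ∞), x^a e^{-x} dx)`. -/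
noncomputable def laguerreNormSq (a : ℝ) (k : ℕ) : ℝ :=
  k.factorial * Real.Gamma (k + a + 1)

lemma natCast_add_add_one_ne_zero (ha : ∀ n : ℕ, a + 1 ≠ -n) (k : ℕ) : (k : ℝ) + a + 1 ≠ 0 :=
  fun h => ha k (by linarith)

lemma Gamma_natCast_add_add_one_ne_zero (ha : ∀ n : ℕ, a + 1 ≠ -n) (k : ℕ) :
    Real.Gamma (k + a + 1) ≠ 0 :=
  Real.Gamma_ne_zero fun m h => ha (k + m) (by push_cast; linarith)

lemma Gamma_natCast_succ_add_add_one (ha : ∀ n : ℕ, a + 1 ≠ -n) (k : ℕ) :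
    Real.Gamma ((k + 1 : ℕ) + a + 1) = (k + a + 1) * Real.Gamma (k + a + 1) := by
  rw [← Real.Gamma_add_one (natCast_add_add_one_ne_zero ha k)]
  congr 1; push_cast; ring

lemma laguerreNormSq_ne_zero (ha : ∀ n : ℕ, a + 1 ≠ -n) (k : ℕ) : laguerreNormSq a k ≠ 0 :=
  mul_ne_zero (Nat.cast_ne_zero.mpr k.factorial_ne_zero) (Gamma_natCast_add_add_one_ne_zero ha k)

lemma laguerreNormSq_succ (ha : ∀ n : ℕ, a + 1 ≠ -n) (k : ℕ) :
    laguerreNormSq a (k + 1) = (k + 1) * (k + 1 + a) * laguerreNormSq a k := by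
  rw [laguerreNormSq, laguerreNormSq, Gamma_natCast_succ_add_add_one ha, Nat.factorial_succ]
  push_cast; ring

lemma rLSE_eq_half_laguerreNormSq (a : ℝ) (m : ℕ) :
    rLSE a m = laguerreNormSq a (2 * m + 1) / 2 := by
  rw [rLSE, laguerreNormSq,
    show ((2 * m + 1 : ℕ) : ℝ) + a + 1 = a + 2 * m + 2 by push_cast; ring]
  ring

/-- The coefficient of `X ^ j` in the monic Laguerre polynomial `p_k`. The binomial coefficient
makes it vanish for `j > k`. -/
noncomputable def laguerreCoeff (a : ℝ) (k j : ℕ) : ℝ :=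
  (-1) ^ (k + j) * k.choose j * (Real.Gamma (k + a + 1) / Real.Gamma (j + a + 1))

/-- The monic Laguerre polynomial `p_k` as a formal polynomial. -/
noncomputable def laguerrePoly (a : ℝ) (k : ℕ) : Polynomial ℝ :=
  ∑ j ∈ range (k + 1), Polynomial.monomial j (laguerreCoeff a k j)

lemma laguerrePoly_coeff (a : ℝ) (k j : ℕ) :
    (laguerrePoly a k).coeff j = laguerreCoeff a k j := by
  simp only [laguerrePoly, Polynomial.finsetSum_coeff, Polynomial.coeff_monomial, sum_ite_eq',
    mem_range, ite_eq_left_iff, not_lt]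
  intro hkj
  rw [laguerreCoeff, Nat.choose_eq_zero_of_lt hkj]
  simp

lemma laguerreP_eq_eval (a : ℝ) (k : ℕ) (x : ℝ) :
    laguerreP a k x = (laguerrePoly a k).eval x := by
  rw [laguerreP, laguerreL, laguerrePoly, Polynomial.eval_finsetSum, mul_sum]
  refine sum_congr rfl fun j hj => ?_
  have hjk : j ≤ k := mem_range_succ_iff.mp hj
  rw [Polynomial.eval_monomial, laguerreCoeff, Nat.cast_choose ℝ hjk, pow_add]
  field_simp

lemma cast_sub_mul_choose (R : Type*) [CommRing R] (k j : ℕ) :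
    ((k : R) - j) * k.choose j = (j + 1) * k.choose (j + 1) := by
  rcases le_or_gt j k with hjk | hkj
  · have h := congrArg (Nat.cast (R := R)) (Nat.choose_succ_right_eq k j)
    push_cast [hjk] at h
    linear_combination -h
  · simp [Nat.choose_eq_zero_of_lt hkj, Nat.choose_eq_zero_of_lt (hkj.trans j.lt_succ_self)]

lemma cast_succ_sub_mul_choose_succ (R : Type*) [CommRing R] (k j : ℕ) :
    ((k : R) + 1 - j) * (k + 1).choose j = (k + 1) * k.choose j := by
  rcases le_or_gt j (k + 1) with hjk | hkj
  · have h := congrArg (Nat.cast (R := R)) (Nat.choose_mul_succ_eq k j)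
    push_cast [hjk] at h
    linear_combination -h
  · simp [Nat.choose_eq_zero_of_lt hkj, Nat.choose_eq_zero_of_lt (k.lt_succ_self.trans hkj)]

-- At `k = 0` the index `k - 1` is truncated, which the factor `k` makes harmless.
lemma sub_mul_laguerreCoeff (ha : ∀ n : ℕ, a + 1 ≠ -n) (k j : ℕ) :
    ((j : ℝ) - k) * laguerreCoeff a k j = k * (k + a) * laguerreCoeff a (k - 1) j := by
  rcases k with _ | k
  · rcases j with _ | j <;> simp [laguerreCoeff]
  · rw [Nat.add_sub_cancel, laguerreCoeff, laguerreCoeff, Gamma_natCast_succ_add_add_one ha]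
    push_cast
    linear_combination (-1) ^ (k + j) * (k + a + 1) *
      (Real.Gamma (k + a + 1) / Real.Gamma (j + a + 1)) * cast_succ_sub_mul_choose_succ ℝ k j

lemma laguerreCoeff_succ_zero (ha : ∀ n : ℕ, a + 1 ≠ -n) (k : ℕ) :
    laguerreCoeff a (k + 1) 0 = -(k + a + 1) * laguerreCoeff a k 0 := by
  rw [laguerreCoeff, laguerreCoeff, Gamma_natCast_succ_add_add_one ha, Nat.choose_zero_right,
    Nat.choose_zero_right]
  ring

lemma laguerreCoeff_succ_succ (ha : ∀ n : ℕ, a + 1 ≠ -n) (k j : ℕ) :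
    laguerreCoeff a (k + 1) (j + 1) =
      laguerreCoeff a k j - (k + j + a + 2) * laguerreCoeff a k (j + 1) := by
  have hj := natCast_add_add_one_ne_zero ha j
  have hΓ := Gamma_natCast_add_add_one_ne_zero ha j
  rw [laguerreCoeff, laguerreCoeff, laguerreCoeff, Gamma_natCast_succ_add_add_one ha k,
    Gamma_natCast_succ_add_add_one ha j, Nat.choose_succ_succ', pow_add, pow_add, pow_add]
  push_cast
  field_simp
  linear_combination Real.Gamma (k + a + 1) * (-1) ^ (k + j) * cast_sub_mul_choose ℝ k j

lemma X_mul_derivative_laguerrePoly (ha : ∀ n : ℕ, a + 1 ≠ -n) (k : ℕ) :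
    Polynomial.X * (laguerrePoly a k).derivative =
      Polynomial.C (k : ℝ) * laguerrePoly a k +
        Polynomial.C (k * (k + a)) * laguerrePoly a (k - 1) := by
  ext j
  have h := sub_mul_laguerreCoeff ha k j
  rcases j with _ | j
  · simp only [Polynomial.coeff_X_mul_zero, Polynomial.coeff_add, Polynomial.coeff_C_mul,
      laguerrePoly_coeff]
    push_cast at h
    linarith
  · simp only [Polynomial.coeff_X_mul, Polynomial.coeff_derivative, Polynomial.coeff_add,
      Polynomial.coeff_C_mul, laguerrePoly_coeff]
    push_cast at h
    linarith

lemma laguerrePoly_succ (ha : ∀ n : ℕ, a + 1 ≠ -n) (k : ℕ) :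
    laguerrePoly a (k + 1) =
      Polynomial.X * laguerrePoly a k - Polynomial.C (k + a + 1) * laguerrePoly a k -
        Polynomial.X * (laguerrePoly a k).derivative := by
  ext j
  rcases j with _ | j
  · simp only [Polynomial.coeff_sub, Polynomial.coeff_X_mul_zero, Polynomial.coeff_C_mul,
      laguerrePoly_coeff, laguerreCoeff_succ_zero ha]
    ring
  · simp only [Polynomial.coeff_sub, Polynomial.coeff_X_mul, Polynomial.coeff_C_mul,
      Polynomial.coeff_derivative, laguerrePoly_coeff, laguerreCoeff_succ_succ ha]
    ring

/-- The function `x ^ s e^{-x/2}`; with `s = a / 2` it is the square root of the Laguerre weight. -/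
noncomputable def laguerreWeight (s x : ℝ) : ℝ :=
  x ^ s * Real.exp (-x / 2)

lemma hasDerivAt_laguerreWeight_mul (s : ℝ) {f : ℝ → ℝ} {f' y : ℝ} (hf : HasDerivAt f f' y)
    (hy : 0 < y) :
    HasDerivAt (fun t => laguerreWeight s t * f t)
      (laguerreWeight (s - 1) y * ((s - y / 2) * f y + y * f')) y := by
  have hpow : HasDerivAt (fun t : ℝ => t ^ s) (s * y ^ (s - 1)) y :=
    Real.hasDerivAt_rpow_const (Or.inl hy.ne')
  have hexp : HasDerivAt (fun t : ℝ => Real.exp (-t / 2)) (Real.exp (-y / 2) * (-1 / 2)) y :=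
    ((hasDerivAt_id y).neg.div_const 2).exp
  have hys : y ^ s = y ^ (s - 1) * y := by rw [← Real.rpow_add_one hy.ne', sub_add_cancel]
  refine ((hpow.mul hexp).mul hf).congr_deriv ?_
  rw [laguerreWeight, Pi.mul_apply, hys]
  ring

lemma hasDerivAt_laguerreWeight_mul_laguerreP (ha : ∀ n : ℕ, a + 1 ≠ -n) (k : ℕ) {y : ℝ}
    (hy : 0 < y) :
    HasDerivAt (fun t => laguerreWeight ((a + 1) / 2) t * laguerreP a k t)
      (laguerreWeight ((a - 1) / 2) y *
        ((k * (k + a) * laguerreP a (k - 1) y - laguerreP a (k + 1) y) / 2)) y := by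
  have hlower := congrArg (Polynomial.eval y) (X_mul_derivative_laguerrePoly ha k)
  have hraise := congrArg (Polynomial.eval y) (laguerrePoly_succ ha k)
  simp only [Polynomial.eval_add, Polynomial.eval_sub, Polynomial.eval_mul, Polynomial.eval_C,
    Polynomial.eval_X] at hlower hraise
  simp only [laguerreP_eq_eval]
  refine (hasDerivAt_laguerreWeight_mul _ ((laguerrePoly a k).hasDerivAt y) hy).congr_deriv ?_
  rw [show (a + 1) / 2 - 1 = (a - 1) / 2 by ring]
  -- The derivative is the average of the lowering and the raising relation.
  linear_combination laguerreWeight ((a - 1) / 2) y * (hlower + hraise) / 2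

open Asymptotics Filter in
lemma laguerreWeight_mul_eval_isLittleO_exp (s : ℝ) (P : Polynomial ℝ) :
    (fun t => laguerreWeight s t * P.eval t) =o[atTop] fun t => Real.exp (-(1 / 4) * t) := by
  induction P using Polynomial.induction_on' with
  | add p q hp hq => simpa only [Polynomial.eval_add, mul_add] using hp.add hq
  | monomial n c =>
    have hpow : (fun t : ℝ => c * t ^ (s + n)) =o[atTop] fun t => Real.exp (1 / 4 * t) :=
      (isLittleO_rpow_exp_pos_mul_atTop (s + n) (by norm_num)).const_mul_left c
    refine (hpow.mul_isBigO (isBigO_refl (fun t => Real.exp (-t / 2)) atTop)).congr' ?_ ?_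
    · filter_upwards [eventually_gt_atTop 0] with t ht
      rw [Polynomial.eval_monomial, laguerreWeight, Real.rpow_add ht, Real.rpow_natCast]
      ring
    · exact .of_forall fun t => (Real.exp_add _ _).symm.trans (by ring_nf)

lemma tendsto_laguerreWeight_mul_eval_atTop (s : ℝ) (P : Polynomial ℝ) :
    Filter.Tendsto (fun t => laguerreWeight s t * P.eval t) Filter.atTop (nhds 0) := by
  refine (laguerreWeight_mul_eval_isLittleO_exp s P).trans_tendsto ?_
  exact Real.tendsto_exp_atBot.comp (Filter.tendsto_id.const_mul_atTop_of_neg (by norm_num))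

lemma integrableOn_laguerreWeight_mul_eval (s : ℝ) (P : Polynomial ℝ) {x : ℝ} (hx : 0 < x) :
    IntegrableOn (fun t => laguerreWeight s t * P.eval t) (Set.Ioi x) := by
  refine integrable_of_isBigO_exp_neg (b := 1 / 4) (by norm_num) ?_
    (laguerreWeight_mul_eval_isLittleO_exp s P).isBigO
  have hpow : ContinuousOn (fun t : ℝ => t ^ s) (Set.Ici x) :=
    continuousOn_id.rpow_const fun t ht => Or.inl (hx.trans_le ht).ne'
  have hexp : Continuous fun t : ℝ => Real.exp (-t / 2) := by fun_prop
  exact (hpow.mul hexp.continuousOn).mul P.continuous.continuousOn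

/-- The constants `g_i = 2^{2i} i! Γ(a/2+i+1)` for which `q̃_{2m} = g_m ∑_{i ≤ m} p_{2i} / g_i`,
expressed through the constants `h_i` for the parameter `a / 2`. -/
noncomputable def evenScale (a : ℝ) (i : ℕ) : ℝ :=
  2 ^ (2 * i) * laguerreNormSq (a / 2) i

lemma half_add_one_ne_neg_natCast (ha : ∀ n : ℕ, a + 1 ≠ -n) (n : ℕ) : a / 2 + 1 ≠ -n :=
  fun h => ha (2 * n + 1) (by push_cast; linarith)

lemma evenScale_ne_zero (ha : ∀ n : ℕ, a + 1 ≠ -n) (i : ℕ) : evenScale a i ≠ 0 :=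
  mul_ne_zero (by positivity) (laguerreNormSq_ne_zero (half_add_one_ne_neg_natCast ha) i)

lemma evenScale_succ (ha : ∀ n : ℕ, a + 1 ≠ -n) (i : ℕ) :
    evenScale a (i + 1) = (2 * i + 2) * (2 * i + 2 + a) * evenScale a i := by
  rw [evenScale, evenScale, laguerreNormSq_succ (half_add_one_ne_neg_natCast ha)]
  ring

lemma qLSE_odd (a : ℝ) (m : ℕ) : qLSE a (2 * m + 1) = laguerreP a (2 * m + 1) := by
  funext x
  rw [qLSE, if_pos (by omega)]

lemma qLSE_even (a : ℝ) (m : ℕ) (x : ℝ) :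
    qLSE a (2 * m) x =
      evenScale a m * ∑ i ∈ range (m + 1), laguerreP a (2 * i) x / evenScale a i := by
  have hscale (i : ℕ) :
      2 ^ (2 * i) * (i.factorial : ℝ) * Real.Gamma (a / 2 + i + 1) = evenScale a i := by
    rw [evenScale, laguerreNormSq, add_comm (a / 2), mul_assoc]
  rw [qLSE, if_neg (by omega), Nat.mul_div_cancel_left m two_pos]
  simp only [hscale]

lemma qLSE_zero (ha : ∀ n : ℕ, a + 1 ≠ -n) (x : ℝ) : qLSE a 0 x = laguerreP a 0 x := by
  have h := qLSE_even a 0 x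
  rwa [zero_add, sum_range_one, mul_div_cancel₀ _ (evenScale_ne_zero ha 0)] at h

lemma qLSE_even_succ (ha : ∀ n : ℕ, a + 1 ≠ -n) (m : ℕ) (x : ℝ) :
    qLSE a (2 * (m + 1)) x =
      laguerreP a (2 * (m + 1)) x + (2 * m + 2) * (2 * m + 2 + a) * qLSE a (2 * m) x := by
  rw [qLSE_even, qLSE_even, sum_range_succ, mul_add, mul_div_cancel₀ _ (evenScale_ne_zero ha _),
    evenScale_succ ha]
  ring

lemma exists_polynomial_eval_eq_qLSE_even (a : ℝ) (m : ℕ) :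
    ∃ P : Polynomial ℝ, ∀ x, qLSE a (2 * m) x = P.eval x := by
  refine ⟨Polynomial.C (evenScale a m) *
    ∑ i ∈ range (m + 1), Polynomial.C (evenScale a i)⁻¹ * laguerrePoly a (2 * i), fun x => ?_⟩
  simp only [qLSE_even, laguerreP_eq_eval, Polynomial.eval_mul, Polynomial.eval_C,
    Polynomial.eval_finsetSum, div_eq_inv_mul]

lemma hasDerivAt_laguerreWeight_mul_qLSE_even (ha : ∀ n : ℕ, a + 1 ≠ -n) (m : ℕ) {y : ℝ}
    (hy : 0 < y) :
    HasDerivAt (fun t => laguerreWeight ((a + 1) / 2) t * qLSE a (2 * m) t)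
      (-(1 / 2) * (laguerreWeight ((a - 1) / 2) y * laguerreP a (2 * m + 1) y)) y := by
  induction m with
  | zero =>
    simp only [mul_zero, qLSE_zero ha]
    refine (hasDerivAt_laguerreWeight_mul_laguerreP ha 0 hy).congr_deriv ?_
    push_cast; ring
  | succ m ih =>
    have h := (hasDerivAt_laguerreWeight_mul_laguerreP ha (2 * (m + 1)) hy).add
      (ih.const_mul ((2 * m + 2) * (2 * m + 2 + a)))
    refine (h.congr_deriv ?_).congr_of_eventuallyEq (.of_forall fun t => ?_)
    · rw [show 2 * (m + 1) - 1 = 2 * m + 1 by omega]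
      push_cast; ring
    · simp only [qLSE_even_succ ha, Pi.add_apply]
      ring

lemma integral_Ioi_laguerreWeight_mul_laguerreP_odd (ha : ∀ n : ℕ, a + 1 ≠ -n) (m : ℕ) {x : ℝ}
    (hx : 0 < x) :
    ∫ t in Set.Ioi x, laguerreWeight ((a - 1) / 2) t * laguerreP a (2 * m + 1) t =
      2 * (laguerreWeight ((a + 1) / 2) x * qLSE a (2 * m) x) := by
  have hderiv (t : ℝ) (ht : t ∈ Set.Ici x) :=
    hasDerivAt_laguerreWeight_mul_qLSE_even ha m (hx.trans_le ht)
  have hint : IntegrableOn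
      (fun t => laguerreWeight ((a - 1) / 2) t * laguerreP a (2 * m + 1) t) (Set.Ioi x) := by
    simpa only [laguerreP_eq_eval] using integrableOn_laguerreWeight_mul_eval _ _ hx
  have hlim : Filter.Tendsto (fun t => laguerreWeight ((a + 1) / 2) t * qLSE a (2 * m) t)
      Filter.atTop (nhds 0) := by
    obtain ⟨P, hP⟩ := exists_polynomial_eval_eq_qLSE_even a m
    simpa only [hP] using tendsto_laguerreWeight_mul_eval_atTop _ P
  have h := integral_Ioi_of_hasDerivAt_of_tendsto' hderiv (hint.const_mul _) hlim
  rw [integral_const_mul] at h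
  linarith

/-- The Christoffel–Darboux kernel `∑_{l < n} p_l(x) p_l(y) / h_l` of the Laguerre polynomials,
without the weight. -/
noncomputable def laguerreKernel (a : ℝ) (n : ℕ) (x y : ℝ) : ℝ :=
  ∑ l ∈ range n, laguerreP a l x * laguerreP a l y / laguerreNormSq a l

lemma laguerreKernel_succ (a : ℝ) (n : ℕ) (x y : ℝ) :
    laguerreKernel a (n + 1) x y =
      laguerreKernel a n x y + laguerreP a n x * laguerreP a n y / laguerreNormSq a n :=
  sum_range_succ _ n

lemma qLSE_even_succ_div_laguerreNormSq (ha : ∀ n : ℕ, a + 1 ≠ -n) (m : ℕ) (x : ℝ) :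
    qLSE a (2 * (m + 1)) x / laguerreNormSq a (2 * (m + 1)) =
      laguerreP a (2 * (m + 1)) x / laguerreNormSq a (2 * (m + 1)) +
        qLSE a (2 * m) x / laguerreNormSq a (2 * m + 1) := by
  have hnorm : laguerreNormSq a (2 * (m + 1)) =
      (2 * m + 2) * (2 * m + 2 + a) * laguerreNormSq a (2 * m + 1) := by
    rw [show 2 * (m + 1) = 2 * m + 1 + 1 by ring, laguerreNormSq_succ ha]
    push_cast; ring
  have hratio : (2 * m + 2 : ℝ) * (2 * m + 2 + a) ≠ 0 :=
    left_ne_zero_of_mul (hnorm ▸ laguerreNormSq_ne_zero ha (2 * (m + 1)))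
  rw [qLSE_even_succ ha, add_div, add_right_inj, hnorm, mul_div_mul_left _ _ hratio]

lemma S4LSE_succ (ha : ∀ n : ℕ, a + 1 ≠ -n) (N : ℕ) (x : ℝ) {y : ℝ} (hy : 0 < y) :
    S4LSE a (N + 1) x y = S4LSE a N x y +
      1 / 2 * laguerreWeight ((a + 1) / 2) x * laguerreWeight ((a - 1) / 2) y *
        (qLSE a (2 * N) x / laguerreNormSq a (2 * N) * laguerreP a (2 * N) y
          - qLSE a (2 * N) x / laguerreNormSq a (2 * N + 1) * laguerreP a (2 * (N + 1)) y
          + laguerreP a (2 * N + 1) x * laguerreP a (2 * N + 1) y /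
            laguerreNormSq a (2 * N + 1)) := by
  have hodd := (hasDerivAt_laguerreWeight_mul_laguerreP ha (2 * N + 1) hy).deriv
  have heven := (hasDerivAt_laguerreWeight_mul_qLSE_even ha N hy).deriv
  have heven_ne := laguerreNormSq_ne_zero ha (2 * N)
  have hodd_ne := laguerreNormSq_ne_zero ha (2 * N + 1)
  have hratio : ((2 * N + 1 : ℕ) : ℝ) * ((2 * N + 1 : ℕ) + a) =
      laguerreNormSq a (2 * N + 1) / laguerreNormSq a (2 * N) := by
    rw [laguerreNormSq_succ ha, mul_div_cancel_right₀ _ heven_ne, Nat.cast_succ]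
  simp only [laguerreWeight] at hodd heven ⊢
  rw [S4LSE, sum_range_succ, ← S4LSE, qLSE_odd, hodd, heven, rLSE_eq_half_laguerreNormSq, hratio,
    Nat.add_sub_cancel, show 2 * (N + 1) = 2 * N + 1 + 1 by ring]
  field_simp
  ring

lemma S4LSE_succ_eq_laguerreKernel_sub (ha : ∀ n : ℕ, a + 1 ≠ -n) (N : ℕ) (x : ℝ) {y : ℝ}
    (hy : 0 < y) :
    S4LSE a (N + 1) x y =
      1 / 2 * laguerreWeight ((a + 1) / 2) x * laguerreWeight ((a - 1) / 2) y *
        (laguerreKernel a (2 * (N + 1)) x y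
          - qLSE a (2 * N) x / laguerreNormSq a (2 * N + 1) * laguerreP a (2 * (N + 1)) y) := by
  induction N with
  | zero =>
    rw [S4LSE_succ ha 0 x hy]
    simp only [S4LSE, laguerreKernel, sum_range_succ, range_zero, sum_empty, mul_zero, zero_add,
      mul_one, qLSE_zero ha]
    ring
  | succ N ih =>
    rw [S4LSE_succ ha (N + 1) x hy, ih, qLSE_even_succ_div_laguerreNormSq ha,
      show 2 * (N + 1 + 1) = 2 * (N + 1) + 1 + 1 by ring, laguerreKernel_succ, laguerreKernel_succ]
    ring

end Laguerre

theorem lse_kernel_summation_general (a : ℝ) (ha : ∀ n : ℕ, a + 1 ≠ -n) (N : ℕ) (hN : 1 ≤ N)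
    (x y : ℝ) (hx : 0 < x) (hy : 0 < y) :
    S4LSE a N x y
      = (1 / 2) * x ^ ((a + 1) / 2) * y ^ ((a - 1) / 2) * Real.exp (-(x + y) / 2) *
          ∑ l ∈ range (2 * N),
            laguerreP a l x * laguerreP a l y /
              ((Nat.factorial l) * Real.Gamma (a + (l : ℝ) + 1))
        - (1 / (4 * (Nat.factorial (2 * N - 1)) * Real.Gamma (a + 2 * (N : ℝ)))) *
            (y ^ ((a - 1) / 2) * Real.exp (-y / 2)) * laguerreP a (2 * N) y *
            ∫ t in Set.Ioi x,
              t ^ ((a - 1) / 2) * Real.exp (-t / 2) * laguerreP a (2 * N - 1) t := by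
  obtain ⟨M, rfl⟩ := Nat.exists_eq_add_of_le' hN
  have hkernel : ∑ l ∈ range (2 * (M + 1)), laguerreP a l x * laguerreP a l y /
      ((Nat.factorial l) * Real.Gamma (a + (l : ℝ) + 1)) = laguerreKernel a (2 * (M + 1)) x y := by
    simp only [laguerreKernel, laguerreNormSq, add_comm a]
  have hnorm : 4 * ((2 * M + 1).factorial : ℝ) * Real.Gamma (a + 2 * (M + 1 : ℕ)) =
      4 * laguerreNormSq a (2 * M + 1) := by
    rw [laguerreNormSq, mul_assoc,
      show ((2 * M + 1 : ℕ) : ℝ) + a + 1 = a + 2 * (M + 1 : ℕ) by push_cast; ring]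
  have hexp : Real.exp (-(x + y) / 2) = Real.exp (-x / 2) * Real.exp (-y / 2) := by
    rw [← Real.exp_add]; congr 1; ring
  have hint := integral_Ioi_laguerreWeight_mul_laguerreP_odd ha M hx
  have hsum := S4LSE_succ_eq_laguerreKernel_sub ha M x hy
  simp only [laguerreWeight] at hint hsum
  rw [hsum, hkernel, hexp, show 2 * (M + 1) - 1 = 2 * M + 1 by omega, hnorm, hint]
  field_simp
  ring

/-- Closed-form summation of the Laguerre symplectic ensemble kernel `S̃₄(x,y)`. -/
theorem lse_kernel_summation (a : ℝ) (ha : -1 < a) (N : ℕ) (hN : 1 ≤ N)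
    (x y : ℝ) (hx : 0 < x) (hy : 0 < y) :
    S4LSE a N x y
      = (1 / 2) * x ^ ((a + 1) / 2) * y ^ ((a - 1) / 2) * Real.exp (-(x + y) / 2) *
          ∑ l ∈ range (2 * N),
            laguerreP a l x * laguerreP a l y /
              ((Nat.factorial l) * Real.Gamma (a + (l : ℝ) + 1))
        - (1 / (4 * (Nat.factorial (2 * N - 1)) * Real.Gamma (a + 2 * (N : ℝ)))) *
            (y ^ ((a - 1) / 2) * Real.exp (-y / 2)) * laguerreP a (2 * N) y *
            ∫ t in Set.Ioi x, t ^ ((a - 1) / 2) * Real.exp (-t / 2) * laguerreP a (2 * N - 1) t := by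
  exact lse_kernel_summation_general a (fun n h => by linarith [n.cast_nonneg (α := ℝ)])
    N hN x y hx hy
end

section
/- Let a, b > 0 be real and let N ≥ 2 be an even natural number. Define the weight w̃(t) = (1−t)^{(a−1)/2}(1+t)^{(b−1)/2} on (−1,1), the polynomials q̃_{2m}(x) = p_{2m}(x), q̃_{2m+1}(x) = p_{2m+1}(x) − [8m(2m+a)(2m+b)(a+b+2m)/((a+b+4m−1)(a+b+4m)(a+b+4m+1)(a+b+4m+2))]·p_{2m−1}(x) (with p_{−1} = 0), the normalizations r̃_k = 2^{a+b+4k+2}(2k)!Γ(a+2k+1)Γ(b+2k+1)Γ(a+b+2k+1)/(Γ(a+b+4k+1)Γ(a+b+4k+3)), and Φ̃_k(x) = (1/2)∫_{−1}^{1} sgn(x−t)·q̃_k(t)·w̃(t) dt, where p_k are the monic Jacobi polynomials with parameters a, b and squared norms h_k. Then for all x, y ∈ (−1, 1): Σ_{k=0}^{N/2−1} (w̃(y)/r̃_k)·(Φ̃_{2k}(x)·q̃_{2k+1}(y) − Φ̃_{2k+1}(x)·q̃_{2k}(y)) = (1−x)^{(a+1)/2}(1+x)^{(b+1)/2}(1−y)^{(a−1)/2}(1+y)^{(b−1)/2}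 Σ_{l=0}^{N−2} p_l(x)p_l(y)/h_l + ((2N−2+a+b)/(2h_{N−2}))·w̃(y)·p_{N−1}(y)·(1/2)∫_{−1}^{1} sgn(x−t)·w̃(t)·p_{N−2}(t) dt. -/
open MeasureTheory Finset

/-- The Jacobi polynomial `P_n^{(a,b)}`. -/
noncomputable def jacobiP (a b : ℝ) (n : ℕ) (x : ℝ) : ℝ :=
  ∑ s ∈ range (n + 1),
    (Real.Gamma ((n : ℝ) + a + 1) / (Real.Gamma (a + (s : ℝ) + 1) * (Nat.factorial (n - s)))) *
    (Real.Gamma ((n : ℝ) + b + 1) / (Real.Gamma ((n : ℝ) + b - (s : ℝ) + 1) * (Nat.factorial s))) *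
    ((x - 1) / 2) ^ s * ((x + 1) / 2) ^ (n - s)

/-- The monic Jacobi polynomials `p_k = 2^k k! Γ(a+b+k+1)/Γ(a+b+2k+1) · P_k^{(a,b)}`. -/
noncomputable def jacobiMonic (a b : ℝ) (k : ℕ) (x : ℝ) : ℝ :=
  2 ^ k * (Nat.factorial k) * Real.Gamma (a + b + (k : ℝ) + 1) /
    Real.Gamma (a + b + 2 * (k : ℝ) + 1) * jacobiP a b k x

/-- The squared norms `h_k = ∫_{−1}^1 (1−x)^a (1+x)^b p_k(x)² dx`. -/
noncomputable def jacobiNorm (a b : ℝ) (k : ℕ) : ℝ :=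
  2 ^ (a + b + 1 + 2 * (k : ℝ)) * Real.Gamma ((k : ℝ) + 1) *
    Real.Gamma (a + b + (k : ℝ) + 1) * Real.Gamma (a + (k : ℝ) + 1) *
    Real.Gamma (b + (k : ℝ) + 1) /
    (Real.Gamma (a + b + 2 * (k : ℝ) + 2) * Real.Gamma (a + b + 2 * (k : ℝ) + 1))

/-- The weight `w̃(t) = (1−t)^{(a−1)/2}(1+t)^{(b−1)/2}`. -/
noncomputable def wJOE (a b t : ℝ) : ℝ := (1 - t) ^ ((a - 1) / 2) * (1 + t) ^ ((b - 1) / 2)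

/-- `q̃_{2m} = p_{2m}`, and `q̃_{2m+1} = p_{2m+1} −
[8m(2m+a)(2m+b)(a+b+2m)/((a+b+4m−1)(a+b+4m)(a+b+4m+1)(a+b+4m+2))] p_{2m−1}`. -/
noncomputable def qJOE (a b : ℝ) (j : ℕ) (x : ℝ) : ℝ :=
  if j % 2 = 0 then jacobiMonic a b j x
  else jacobiMonic a b j x -
    (4 * ((j : ℝ) - 1) * (((j : ℝ) - 1) + a) * (((j : ℝ) - 1) + b) * (a + b + ((j : ℝ) - 1)) /
      ((a + b + 2 * ((j : ℝ) - 1) - 1) * (a + b + 2 * ((j : ℝ) - 1)) *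
        (a + b + 2 * ((j : ℝ) - 1) + 1) * (a + b + 2 * ((j : ℝ) - 1) + 2)))
      * jacobiMonic a b (j - 2) x

/-- The normalizations `r̃_k`. -/
noncomputable def rJOE (a b : ℝ) (k : ℕ) : ℝ :=
  2 ^ (a + b + 4 * (k : ℝ) + 2) * (Nat.factorial (2 * k)) *
    Real.Gamma (a + 2 * (k : ℝ) + 1) * Real.Gamma (b + 2 * (k : ℝ) + 1) *
    Real.Gamma (a + b + 2 * (k : ℝ) + 1) /
    (Real.Gamma (a + b + 4 * (k : ℝ) + 1) * Real.Gamma (a + b + 4 * (k : ℝ) + 3))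

/-- `Φ̃_k(x) = (1/2)∫_{−1}^1 sgn(x−t) q̃_k(t) w̃(t) dt`. -/
noncomputable def PhiJOE (a b : ℝ) (k : ℕ) (x : ℝ) : ℝ :=
  (1 / 2) * ∫ t in Set.Ioo (-1 : ℝ) 1, Real.sign (x - t) * qJOE a b k t * wJOE a b t

/-!
Up to a factor, `p_n` is a coefficient of Bateman's product of two Bessel–Clifford series in
`(x - 1) / 2` and `(x + 1) / 2`. Comparing coefficients there shows that, for
`W(x) = (1 - x) ^ ((a + 1) / 2) * (1 + x) ^ ((b + 1) / 2)`, the derivative of `W p_n` is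
`-(a + b + 2 n + 2) / 2 * w̃ Q_n`, where `Q_0 = p_1` and
`Q_n = p_{n+1} - (ρ_n / ρ_{n-1}) p_{n-1}` otherwise; moreover `q̃_{2m+1} = Q_{2m}`, `r̃_k = ρ_{2k}`
and `2 h_n = (a + b + 2 n + 2) ρ_n`.

As `W` vanishes at `±1`, the operator `ε f (x) = ½ ∫ sgn(x - t) f(t) dt` inverts this derivative:
`ε(w̃ Q_n) / ρ_n = -W p_n / h_n`. Hence the terms with `Φ̃_{2k+1}` contribute the even part of the
Christoffel–Darboux sum. Written for `Φ_n = ε(w̃ p_n)`, the same formula is the recurrence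
`Φ_{n+2} / ρ_{n+1} = Φ_n / ρ_n - W p_{n+1} / h_{n+1}`, by which the terms with `Φ̃_{2k}` telescope
to the odd part and a single boundary term.
-/

/-- The coefficient of `z ^ k` in the Bessel–Clifford function `₀F₁(; a + 1; z) / Γ(a + 1)`. The
inverse is `0` at the poles of `Γ`, as it is for the entire function `1 / Γ`. -/
noncomputable def besselCoeff (a : ℝ) (k : ℕ) : ℝ :=
  (Real.Gamma (a + k + 1))⁻¹ * (Nat.factorial k : ℝ)⁻¹

/-- The coefficient of `t ^ n` in Bateman's product `(∑ i, α i (u t) ^ i) * (∑ j, β j (v t) ^ j)`,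
where `α` and `β` are the coefficients `besselCoeff` for `a` and `b`, with its `(i, j)` term
weighted by `c i j`. The weight has real arguments so that shifting an index never truncates. -/
noncomputable def batemanSum (a b u v : ℝ) (c : ℝ → ℝ → ℝ) (n : ℕ) : ℝ :=
  ∑ p ∈ antidiagonal n,
    c p.1 p.2 * (besselCoeff a p.1 * u ^ p.1) * (besselCoeff b p.2 * v ^ p.2)

lemma inv_Gamma_eq_mul_inv_Gamma_add_one (s : ℝ) :
    (Real.Gamma s)⁻¹ = s * (Real.Gamma (s + 1))⁻¹ := by
  rcases eq_or_ne s 0 with rfl | hs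
  · simp
  · rw [Real.Gamma_add_one hs, mul_inv, mul_inv_cancel_left₀ hs]

lemma besselCoeff_eq_succ (a : ℝ) (k : ℕ) :
    besselCoeff a k = (k + 1) * (k + 1 + a) * besselCoeff a (k + 1) := by
  have hk : (k : ℝ) + 1 ≠ 0 := k.cast_add_one_ne_zero
  rw [besselCoeff, besselCoeff, inv_Gamma_eq_mul_inv_Gamma_add_one, Nat.factorial_succ]
  push_cast
  rw [← add_assoc a]
  field_simp
  ring

section BatemanSum

variable (a b u v : ℝ)

lemma mul_batemanSum_left (c : ℝ → ℝ → ℝ) (n : ℕ) :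
    u * batemanSum a b u v c n =
      batemanSum a b u v (fun i j ↦ i * (i + a) * c (i - 1) j) (n + 1) := by
  simp only [batemanSum, Nat.sum_antidiagonal_succ, mul_sum]
  simp only [Nat.cast_zero, zero_mul, zero_add, Nat.cast_add_one, add_sub_cancel_right]
  refine sum_congr rfl fun p _ ↦ ?_
  rw [besselCoeff_eq_succ a p.1]
  ring

lemma mul_batemanSum_right (c : ℝ → ℝ → ℝ) (n : ℕ) :
    v * batemanSum a b u v c n =
      batemanSum a b u v (fun i j ↦ j * (j + b) * c i (j - 1)) (n + 1) := by
  simp only [batemanSum, Nat.sum_antidiagonal_succ', mul_sum]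
  simp only [Nat.cast_zero, zero_mul, zero_add, Nat.cast_add_one, add_sub_cancel_right]
  refine sum_congr rfl fun p _ ↦ ?_
  rw [besselCoeff_eq_succ b p.2]
  ring

/-- The homogeneous form of `-(1 - x ^ 2) f' - ((b - a) / 2 - (a + b + 2) / 2 * x) f`, for the
polynomial `f` whose homogenization in `u = (x - 1) / 2` and `v = (x + 1) / 2` is
`batemanSum a b u v 1 n`. -/
noncomputable def batemanDeriv (n : ℕ) : ℝ :=
  2 * (v * batemanSum a b u v (fun i _ ↦ i) n + u * batemanSum a b u v (fun _ j ↦ j) n) +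
    (a + 1) * (v * batemanSum a b u v 1 n) + (b + 1) * (u * batemanSum a b u v 1 n)

lemma batemanDeriv_zero :
    batemanDeriv a b u v 0 = (1 + a) * (1 + b) * batemanSum a b u v 1 1 := by
  simp only [batemanDeriv, mul_batemanSum_left, mul_batemanSum_right]
  simp [batemanSum, Nat.antidiagonal_succ]
  ring

lemma sub_sq_mul_batemanSum (n : ℕ) :
    (v - u) ^ 2 * batemanSum a b u v 1 n =
      batemanSum a b u v (fun i j ↦ j * (j + b) * ((j - 1) * (j - 1 + b))
        - 2 * (i * (i + a) * (j * (j + b))) + i * (i + a) * ((i - 1) * (i - 1 + a))) (n + 2) := by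
  calc (v - u) ^ 2 * batemanSum a b u v 1 n
      = v * (v * batemanSum a b u v 1 n) - 2 * (u * (v * batemanSum a b u v 1 n))
          + u * (u * batemanSum a b u v 1 n) := by ring
    _ = _ := by
      simp only [mul_batemanSum_left, mul_batemanSum_right]
      simp only [batemanSum, mul_sum, ← sum_add_distrib, ← sum_sub_distrib, Pi.one_apply]
      exact sum_congr rfl fun p _ ↦ by ring

lemma batemanDeriv_succ (n : ℕ) :
    (a + b + 2 * n + 3) * batemanDeriv a b u v (n + 1) =
      (n + 2) * (a + b + n + 2) * (n + 2 + a) * (n + 2 + b) * batemanSum a b u v 1 (n + 2)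
        - (v - u) ^ 2 * batemanSum a b u v 1 n := by
  rw [sub_sq_mul_batemanSum]
  -- Both sides are now Bateman sums of degree `n + 2`, and already their weights agree.
  simp only [batemanDeriv, mul_batemanSum_left, mul_batemanSum_right]
  simp only [batemanSum, mul_sum, ← sum_add_distrib, ← sum_sub_distrib, Pi.one_apply]
  refine sum_congr rfl fun p hp ↦ ?_
  have hn : (n : ℝ) = p.1 + p.2 - 2 := by
    rw [eq_sub_iff_add_eq]
    exact_mod_cast (mem_antidiagonal.1 hp).symm
  rw [hn]
  ring

end BatemanSum

lemma one_sub_sq_mul_deriv_pow_mul_pow (i j : ℕ) (x : ℝ) :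
    (1 - x ^ 2) * deriv (fun t : ℝ ↦ ((t - 1) / 2) ^ i * ((t + 1) / 2) ^ j) x =
      -2 * ((x + 1) / 2 * i + (x - 1) / 2 * j) * (((x - 1) / 2) ^ i * ((x + 1) / 2) ^ j) := by
  have hu := (((hasDerivAt_id x).sub_const 1).div_const 2).fun_pow i
  have hv := (((hasDerivAt_id x).add_const 1).div_const 2).fun_pow j
  simp only [id_eq] at hu hv
  rw [(hu.fun_mul hv).deriv]
  have euler (y : ℝ) (k : ℕ) : k * y ^ k = y * (k * y ^ (k - 1)) := by
    cases k with
    | zero => simp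
    | succ k => rw [Nat.add_sub_cancel, pow_succ]; ring
  linear_combination 2 * ((x + 1) / 2) * ((x + 1) / 2) ^ j * euler ((x - 1) / 2) i
    + 2 * ((x - 1) / 2) * ((x - 1) / 2) ^ i * euler ((x + 1) / 2) j

lemma one_sub_sq_mul_deriv_batemanSum (a b : ℝ) (n : ℕ) (x : ℝ) :
    (1 - x ^ 2) * deriv (fun t ↦ batemanSum a b ((t - 1) / 2) ((t + 1) / 2) 1 n) x =
      -batemanDeriv a b ((x - 1) / 2) ((x + 1) / 2) n
        - ((b - a) / 2 - (a + b + 2) / 2 * x)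
          * batemanSum a b ((x - 1) / 2) ((x + 1) / 2) 1 n := by
  have hsum : (fun t ↦ batemanSum a b ((t - 1) / 2) ((t + 1) / 2) 1 n) = fun t ↦
      ∑ p ∈ antidiagonal n, besselCoeff a p.1 * besselCoeff b p.2 *
        (((t - 1) / 2) ^ p.1 * ((t + 1) / 2) ^ p.2) := by
    funext t
    exact sum_congr rfl fun p _ ↦ by rw [Pi.one_apply, Pi.one_apply]; ring
  rw [hsum, deriv_fun_sum fun p _ ↦ by fun_prop]
  simp only [batemanDeriv, batemanSum, mul_sum, ← sum_add_distrib, ← sum_sub_distrib,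
    ← sum_neg_distrib, Pi.one_apply]
  refine sum_congr rfl fun p _ ↦ ?_
  rw [deriv_const_mul_field]
  linear_combination besselCoeff a p.1 * besselCoeff b p.2 *
    one_sub_sq_mul_deriv_pow_mul_pow p.1 p.2 x

lemma add_natCast_add_one_ne_zero {c : ℝ} (hc : -2 < c) (hc' : c ≠ -1) (n : ℕ) :
    c + n + 1 ≠ 0 := by
  cases n with
  | zero => simpa [← eq_neg_iff_add_eq_zero] using hc'
  | succ n =>
    push_cast
    linarith [n.cast_nonneg (α := ℝ)]

lemma Gamma_add_natCast_add_one_ne_zero {c : ℝ} (hc : -2 < c) (hc' : c ≠ -1) (n : ℕ) :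
    Real.Gamma (c + n + 1) ≠ 0 := by
  refine Real.Gamma_ne_zero fun m h ↦ add_natCast_add_one_ne_zero hc hc' (n + m) ?_
  push_cast
  linarith

lemma Gamma_eq_mul_of_eq_add_one {s t : ℝ} (h : t = s + 1) (hs : s ≠ 0) :
    Real.Gamma t = s * Real.Gamma s := by
  rw [h, Real.Gamma_add_one hs]

/-- The factor `κ_n` relating `p_n` to the coefficient of `t ^ n` in Bateman's product. -/
noncomputable def jacobiScale (a b : ℝ) (n : ℕ) : ℝ :=
  2 ^ n * (Nat.factorial n) * Real.Gamma (a + b + n + 1) / Real.Gamma (a + b + 2 * n + 1) *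
    (Real.Gamma (n + a + 1) * Real.Gamma (n + b + 1))

/-- The extension `ρ_n` of the normalizations `r̃_k = ρ_{2k}` to all degrees. -/
noncomputable def skewNorm (a b : ℝ) (n : ℕ) : ℝ :=
  jacobiScale a b n * 2 ^ (a + b + n + 2) / Real.Gamma (a + b + 2 * n + 3)

/-- The extension `Q_n` of `q̃_{2m+1} = Q_{2m}` to all degrees: a polynomial of degree `n + 1`. The
coefficient in the definition of `q̃` is a ratio of consecutive `skewNorm`s, see
`skewNorm_succ_div_skewNorm`. -/
noncomputable def jacobiSkew (a b : ℝ) : ℕ → ℝ → ℝ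
  | 0, x => jacobiMonic a b 1 x
  | n + 1, x => jacobiMonic a b (n + 2) x -
      skewNorm a b (n + 1) / skewNorm a b n * jacobiMonic a b n x

section Normalization

variable (a b : ℝ)

lemma jacobiP_eq_batemanSum (n : ℕ) (x : ℝ) :
    jacobiP a b n x = Real.Gamma (n + a + 1) * Real.Gamma (n + b + 1) *
      batemanSum a b ((x - 1) / 2) ((x + 1) / 2) 1 n := by
  rw [jacobiP, batemanSum, Nat.sum_antidiagonal_eq_sum_range_succ_mk, mul_sum]
  refine sum_congr rfl fun s hs ↦ ?_
  rw [besselCoeff, besselCoeff, Nat.cast_sub (mem_range_succ_iff.1 hs), add_sub_assoc',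
    add_comm b (n : ℝ), Pi.one_apply, Pi.one_apply]
  ring

lemma jacobiMonic_eq_batemanSum (n : ℕ) (x : ℝ) :
    jacobiMonic a b n x =
      jacobiScale a b n * batemanSum a b ((x - 1) / 2) ((x + 1) / 2) 1 n := by
  rw [jacobiMonic, jacobiP_eq_batemanSum, jacobiScale, mul_assoc _ (_ * _)]

lemma differentiable_jacobiMonic (n : ℕ) : Differentiable ℝ (jacobiMonic a b n) := by
  unfold jacobiMonic jacobiP
  fun_prop

lemma continuous_jacobiSkew : ∀ n, Continuous (jacobiSkew a b n)
  | 0 => (differentiable_jacobiMonic a b 1).continuous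
  | n + 1 => (differentiable_jacobiMonic a b (n + 2)).continuous.sub
      (continuous_const.mul (differentiable_jacobiMonic a b n).continuous)

lemma jacobiNorm_eq_jacobiScale (n : ℕ) :
    jacobiNorm a b n =
      jacobiScale a b n * 2 ^ (a + b + n + 1) / Real.Gamma (a + b + 2 * n + 2) := by
  have hpow : (2 : ℝ) ^ (a + b + 1 + 2 * n) = 2 ^ (a + b + n + 1) * 2 ^ n := by
    rw [← Real.rpow_natCast, ← Real.rpow_add two_pos]
    ring_nf
  rw [jacobiNorm, jacobiScale, hpow, Real.Gamma_nat_eq_factorial, add_comm a (n : ℝ),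
    add_comm b (n : ℝ)]
  ring

lemma rJOE_eq_skewNorm (k : ℕ) : rJOE a b k = skewNorm a b (2 * k) := by
  have hpow : (2 : ℝ) ^ (a + b + 4 * k + 2) = 2 ^ (a + b + 2 * k + 2) * 2 ^ (2 * k) := by
    rw [← Real.rpow_natCast, ← Real.rpow_add two_pos]
    push_cast
    ring_nf
  have hfour : (4 : ℝ) * k = 2 * (2 * k) := by ring
  rw [rJOE, skewNorm, jacobiScale, hpow, add_comm a (2 * k : ℝ), add_comm b (2 * k : ℝ)]
  push_cast
  rw [hfour]
  ring

variable {a b}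

lemma two_mul_jacobiNorm (ha : -1 < a) (hb : -1 < b) (n : ℕ) :
    2 * jacobiNorm a b n = (a + b + 2 * n + 2) * skewNorm a b n := by
  have hs : a + b + 2 * n + 2 ≠ 0 := by linarith [n.cast_nonneg (α := ℝ)]
  have hpow : (2 : ℝ) ^ (a + b + n + 2) = 2 ^ (a + b + n + 1) * 2 := by
    rw [← Real.rpow_add_one two_ne_zero]
    ring_nf
  rw [jacobiNorm_eq_jacobiScale, skewNorm, hpow,
    Gamma_eq_mul_of_eq_add_one (t := a + b + 2 * n + 3) (by ring) hs]
  field_simp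

lemma inv_skewNorm (ha : -1 < a) (hb : -1 < b) (n : ℕ) :
    (skewNorm a b n)⁻¹ = (a + b + 2 * n + 2) / (2 * jacobiNorm a b n) := by
  have hs : a + b + 2 * n + 2 ≠ 0 := by linarith [n.cast_nonneg (α := ℝ)]
  rw [two_mul_jacobiNorm ha hb, div_mul_cancel_left₀ hs]

lemma jacobiScale_succ (ha : -1 < a) (hb : -1 < b) (hab : a + b ≠ -1) (n : ℕ) :
    jacobiScale a b (n + 1) = jacobiScale a b n *
      (2 * (n + 1) * (n + 1 + a) * (n + 1 + b) * (a + b + n + 1) /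
        ((a + b + 2 * n + 1) * (a + b + 2 * n + 2))) := by
  have := n.cast_nonneg (α := ℝ)
  have h₁ : a + b + 2 * n + 1 ≠ 0 := mod_cast
    add_natCast_add_one_ne_zero (by linarith : -2 < a + b) hab (2 * n)
  have h₂ : a + b + 2 * n + 2 ≠ 0 := by linarith
  simp only [jacobiScale, Nat.factorial_succ, Nat.cast_mul, Nat.cast_add_one]
  rw [Gamma_eq_mul_of_eq_add_one (by ring)
      (add_natCast_add_one_ne_zero (by linarith : -2 < a + b) hab n),
    Gamma_eq_mul_of_eq_add_one (t := a + b + 2 * (n + 1) + 1) (by ring) h₂,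
    Gamma_eq_mul_of_eq_add_one (t := a + b + 2 * n + 2) (by ring) h₁,
    Gamma_eq_mul_of_eq_add_one (t := n + 1 + a + 1) (s := n + a + 1) (by ring) (by linarith),
    Gamma_eq_mul_of_eq_add_one (t := n + 1 + b + 1) (s := n + b + 1) (by ring) (by linarith)]
  field_simp
  ring

lemma jacobiScale_ne_zero (ha : -1 < a) (hb : -1 < b) (hab : a + b ≠ -1) (n : ℕ) :
    jacobiScale a b n ≠ 0 := by
  have := n.cast_nonneg (α := ℝ)
  have hc : -2 < a + b := by linarith
  have h₁ := Gamma_add_natCast_add_one_ne_zero hc hab n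
  have h₂ : Real.Gamma (a + b + 2 * n + 1) ≠ 0 := mod_cast
    Gamma_add_natCast_add_one_ne_zero hc hab (2 * n)
  have h₃ : Real.Gamma (n + a + 1) ≠ 0 := (Real.Gamma_pos_of_pos (by linarith)).ne'
  have h₄ : Real.Gamma (n + b + 1) ≠ 0 := (Real.Gamma_pos_of_pos (by linarith)).ne'
  unfold jacobiScale
  positivity

lemma skewNorm_ne_zero (ha : -1 < a) (hb : -1 < b) (hab : a + b ≠ -1) (n : ℕ) :
    skewNorm a b n ≠ 0 := by
  have hΓ : Real.Gamma (a + b + 2 * n + 3) ≠ 0 :=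
    (Real.Gamma_pos_of_pos (by linarith [n.cast_nonneg (α := ℝ)])).ne'
  have hκ := jacobiScale_ne_zero ha hb hab n
  unfold skewNorm
  positivity

lemma skewNorm_succ_div_mul_jacobiScale
    (ha : -1 < a) (hb : -1 < b) (hab : a + b ≠ -1) (n : ℕ) :
    skewNorm a b (n + 1) / skewNorm a b n * jacobiScale a b n =
      2 * jacobiScale a b (n + 1) / ((a + b + 2 * n + 3) * (a + b + 2 * n + 4)) := by
  have := n.cast_nonneg (α := ℝ)
  have h₃ : 0 < a + b + 2 * n + 3 := by linarith
  have h₄ : 0 < a + b + 2 * n + 4 := by linarith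
  have hΓ := (Real.Gamma_pos_of_pos h₃).ne'
  have hκ := jacobiScale_ne_zero ha hb hab n
  have hpow : (2 : ℝ) ^ (a + b + (n + 1) + 2) = 2 ^ (a + b + n + 2) * 2 := by
    rw [← Real.rpow_add_one two_ne_zero]
    ring_nf
  simp only [skewNorm, Nat.cast_add_one]
  rw [hpow, Gamma_eq_mul_of_eq_add_one (t := a + b + 2 * (n + 1) + 3) (by ring) h₄.ne',
    Gamma_eq_mul_of_eq_add_one (t := a + b + 2 * n + 4) (by ring) h₃.ne']
  generalize Real.Gamma (a + b + 2 * n + 3) = Γ at hΓ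
  field_simp

lemma skewNorm_succ_div_skewNorm
    (ha : -1 < a) (hb : -1 < b) (hab : a + b ≠ -1) (n : ℕ) :
    skewNorm a b (n + 1) / skewNorm a b n =
      4 * (n + 1) * (n + 1 + a) * (n + 1 + b) * (a + b + (n + 1)) /
        ((a + b + 2 * n + 1) * (a + b + 2 * n + 2) *
          (a + b + 2 * n + 3) * (a + b + 2 * n + 4)) := by
  have hκ := jacobiScale_ne_zero ha hb hab n
  rw [← mul_left_inj' hκ, skewNorm_succ_div_mul_jacobiScale ha hb hab,
    jacobiScale_succ ha hb hab]
  field_simp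
  ring

lemma qJOE_two_mul (a b : ℝ) (k : ℕ) : qJOE a b (2 * k) = jacobiMonic a b (2 * k) := by
  ext x
  simp [qJOE]

lemma qJOE_two_mul_add_one (ha : -1 < a) (hb : -1 < b) (hab : a + b ≠ -1) (k : ℕ) :
    qJOE a b (2 * k + 1) = jacobiSkew a b (2 * k) := by
  ext x
  rw [qJOE, if_neg (by lia)]
  cases k with
  | zero => simp [jacobiSkew]
  | succ k =>
    rw [Nat.mul_add_one, jacobiSkew, skewNorm_succ_div_skewNorm ha hb hab]
    push_cast
    ring_nf

lemma jacobiSkew_eq_batemanDeriv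
    (ha : -1 < a) (hb : -1 < b) (hab : a + b ≠ -1) (n : ℕ) (x : ℝ) :
    (a + b + 2 * n + 2) / 2 * jacobiSkew a b n x =
      jacobiScale a b n * batemanDeriv a b ((x - 1) / 2) ((x + 1) / 2) n := by
  cases n with
  | zero =>
    have h₁ : a + b + 1 ≠ 0 := by rwa [ne_eq, ← eq_neg_iff_add_eq_zero]
    have h₂ : a + b + 2 ≠ 0 := by linarith
    rw [jacobiSkew, jacobiMonic_eq_batemanSum, jacobiScale_succ ha hb hab, batemanDeriv_zero]
    simp only [Nat.cast_zero, mul_zero, add_zero, zero_add]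
    field_simp
  | succ n =>
    have := n.cast_nonneg (α := ℝ)
    have h₃ : a + b + 2 * n + 3 ≠ 0 := by linarith
    have h₄ : a + b + 2 * n + 4 ≠ 0 := by linarith
    have hD := batemanDeriv_succ a b ((x - 1) / 2) ((x + 1) / 2) n
    rw [show (x + 1) / 2 - (x - 1) / 2 = 1 by ring, one_pow, one_mul] at hD
    rw [jacobiSkew, jacobiMonic_eq_batemanSum, jacobiMonic_eq_batemanSum, ← mul_assoc (_ / _),
      skewNorm_succ_div_mul_jacobiScale ha hb hab, jacobiScale_succ ha hb hab (n + 1),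
      eq_div_of_mul_eq h₃ ((mul_comm _ _).trans hD)]
    push_cast
    rw [show a + b + 2 * ((n : ℝ) + 1) + 1 = a + b + 2 * n + 3 by ring,
      show a + b + 2 * ((n : ℝ) + 1) + 2 = a + b + 2 * n + 4 by ring]
    field_simp
    ring

lemma one_sub_sq_mul_deriv_jacobiMonic
    (ha : -1 < a) (hb : -1 < b) (hab : a + b ≠ -1) (n : ℕ) (x : ℝ) :
    (1 - x ^ 2) * deriv (jacobiMonic a b n) x =
      -((a + b + 2 * n + 2) / 2 * jacobiSkew a b n x)
        - ((b - a) / 2 - (a + b + 2) / 2 * x) * jacobiMonic a b n x := by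
  rw [jacobiSkew_eq_batemanDeriv ha hb hab, funext (jacobiMonic_eq_batemanSum a b n),
    deriv_const_mul_field]
  linear_combination jacobiScale a b n * one_sub_sq_mul_deriv_batemanSum a b n x

end Normalization

lemma integral_Ioo_sign_sub_mul {f : ℝ → ℝ} {α β x : ℝ} (hf : IntervalIntegrable f volume α β)
    (hx : x ∈ Set.Icc α β) :
    ∫ t in Set.Ioo α β, Real.sign (x - t) * f t = (∫ t in α..x, f t) - ∫ t in x..β, f t := by
  obtain ⟨hαx, hxβ⟩ := hx
  have hαβ : α ≤ β := hαx.trans hxβ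
  have hxu : x ∈ Set.uIcc α β := Set.Icc_subset_uIcc ⟨hαx, hxβ⟩
  have left : (Set.Ioo α x).EqOn f fun t ↦ Real.sign (x - t) * f t := fun t ht ↦ by
    simp [Real.sign_of_pos (sub_pos.2 ht.2)]
  have right : (Set.Ioo x β).EqOn (-f) fun t ↦ Real.sign (x - t) * f t := fun t ht ↦ by
    simp [Real.sign_of_neg (sub_neg.2 ht.1)]
  have hfl : IntervalIntegrable f volume α x :=
    hf.mono_set (Set.uIcc_subset_uIcc_left hxu)
  have hfr : IntervalIntegrable f volume x β :=
    hf.mono_set (Set.uIcc_subset_uIcc_right hxu)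
  rw [← integral_Ioc_eq_integral_Ioo, ← intervalIntegral.integral_of_le hαβ,
    ← intervalIntegral.integral_add_adjacent_intervals
      (hfl.congr_uIoo (Set.uIoo_of_le hαx ▸ left))
      (hfr.neg.congr_uIoo (Set.uIoo_of_le hxβ ▸ right)),
    ← intervalIntegral.integral_congr_Ioo_of_le hαx left,
    ← intervalIntegral.integral_congr_Ioo_of_le hxβ right]
  simp [sub_eq_add_neg]

/-- The operator `f ↦ ½ ∫ sgn(x - t) f(t) dt` on `(-1, 1)`, a right inverse of differentiation. -/
noncomputable def halfSignIntegral (f : ℝ → ℝ) (x : ℝ) : ℝ :=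
  (1 / 2) * ∫ t in Set.Ioo (-1 : ℝ) 1, Real.sign (x - t) * f t

section HalfSignIntegral

variable {f g F : ℝ → ℝ} {x : ℝ}

lemma halfSignIntegral_eq_of_hasDerivAt (hF : ContinuousOn F (Set.Icc (-1) 1))
    (hFf : ∀ t ∈ Set.Ioo (-1 : ℝ) 1, HasDerivAt F (f t) t)
    (hf : IntervalIntegrable f volume (-1) 1) (hx : x ∈ Set.Icc (-1 : ℝ) 1) :
    halfSignIntegral f x = F x - (F (-1) + F 1) / 2 := by
  have hxu : x ∈ Set.uIcc (-1 : ℝ) 1 := Set.Icc_subset_uIcc hx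
  rw [halfSignIntegral, integral_Ioo_sign_sub_mul hf hx,
    intervalIntegral.integral_eq_sub_of_hasDerivAt_of_le hx.1
      (hF.mono (Set.Icc_subset_Icc_right hx.2)) (fun t ht ↦ hFf t ⟨ht.1, ht.2.trans_le hx.2⟩)
      (hf.mono_set (Set.uIcc_subset_uIcc_left hxu)),
    intervalIntegral.integral_eq_sub_of_hasDerivAt_of_le hx.2
      (hF.mono (Set.Icc_subset_Icc_left hx.1)) (fun t ht ↦ hFf t ⟨hx.1.trans_lt ht.1, ht.2⟩)
      (hf.mono_set (Set.uIcc_subset_uIcc_right hxu))]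
  ring

lemma halfSignIntegral_sub_const_mul (hf : IntervalIntegrable f volume (-1) 1)
    (hg : IntervalIntegrable g volume (-1) 1) (hx : x ∈ Set.Icc (-1 : ℝ) 1) (c : ℝ) :
    halfSignIntegral (fun t ↦ f t - c * g t) x =
      halfSignIntegral f x - c * halfSignIntegral g x := by
  have hl : Set.uIcc (-1) x ⊆ Set.uIcc (-1) 1 :=
    Set.uIcc_subset_uIcc_left (Set.Icc_subset_uIcc hx)
  have hr : Set.uIcc x 1 ⊆ Set.uIcc (-1) 1 :=
    Set.uIcc_subset_uIcc_right (Set.Icc_subset_uIcc hx)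
  simp only [halfSignIntegral]
  rw [integral_Ioo_sign_sub_mul (hf.sub (hg.const_mul c)) hx, integral_Ioo_sign_sub_mul hf hx,
    integral_Ioo_sign_sub_mul hg hx,
    intervalIntegral.integral_sub (hf.mono_set hl) ((hg.mono_set hl).const_mul c),
    intervalIntegral.integral_sub (hf.mono_set hr) ((hg.mono_set hr).const_mul c),
    intervalIntegral.integral_const_mul, intervalIntegral.integral_const_mul]
  ring

end HalfSignIntegral

section Weight

variable (a b t : ℝ)

lemma wJOE_neg : wJOE a b (-t) = wJOE b a t := by
  rw [wJOE, wJOE, sub_neg_eq_add, ← sub_eq_add_neg, mul_comm]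

lemma wJOE_add_two :
    wJOE (a + 2) (b + 2) t = (1 - t) ^ ((a + 1) / 2) * (1 + t) ^ ((b + 1) / 2) := by
  rw [wJOE]
  ring_nf

variable {a b t}

lemma wJOE_add_two_eq_mul (ht : t ∈ Set.Ioo (-1 : ℝ) 1) :
    wJOE (a + 2) (b + 2) t = (1 - t ^ 2) * wJOE a b t := by
  have hl : 1 - t ≠ 0 := by linarith [ht.2]
  have hr : 1 + t ≠ 0 := by linarith [ht.1]
  have hexp (c : ℝ) : (c + 2 - 1) / 2 = (c - 1) / 2 + 1 := by ring
  rw [wJOE, wJOE, hexp, hexp, Real.rpow_add_one hl, Real.rpow_add_one hr]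
  ring

lemma continuous_wJOE_add_two (ha : -1 ≤ a) (hb : -1 ≤ b) :
    Continuous (wJOE (a + 2) (b + 2)) :=
  ((continuous_const.sub continuous_id).rpow_const fun _ ↦ .inr (by linarith)).mul
    ((continuous_const.add continuous_id).rpow_const fun _ ↦ .inr (by linarith))

lemma wJOE_add_two_one (ha : -1 < a) : wJOE (a + 2) (b + 2) 1 = 0 := by
  rw [wJOE, sub_self, Real.zero_rpow (by linarith), zero_mul]

lemma wJOE_add_two_neg_one (hb : -1 < b) : wJOE (a + 2) (b + 2) (-1) = 0 := by
  rw [wJOE_neg, wJOE_add_two_one hb]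

lemma hasDerivAt_wJOE_add_two (ht : t ∈ Set.Ioo (-1 : ℝ) 1) :
    HasDerivAt (wJOE (a + 2) (b + 2))
      (((b - a) / 2 - (a + b + 2) / 2 * t) * wJOE a b t) t := by
  have hl : 1 - t ≠ 0 := by linarith [ht.2]
  have hr : 1 + t ≠ 0 := by linarith [ht.1]
  have hL := ((hasDerivAt_id' t).const_sub 1).rpow_const (p := (a + 1) / 2) (.inl hl)
  have hR := ((hasDerivAt_id' t).const_add 1).rpow_const (p := (b + 1) / 2) (.inl hr)
  have hexp (c : ℝ) : (c + 1) / 2 - 1 = (c - 1) / 2 := by ring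
  have hpow (c : ℝ) {s : ℝ} (hs : s ≠ 0) : s ^ ((c + 1) / 2) = s ^ ((c - 1) / 2) * s := by
    rw [← Real.rpow_add_one hs]
    ring_nf
  rw [funext (wJOE_add_two a b)]
  refine (hL.mul hR).congr_deriv ?_
  rw [hexp, hexp, hpow a hl, hpow b hr, wJOE]
  ring

lemma intervalIntegrable_wJOE_left (a : ℝ) (hb : -1 < b) :
    IntervalIntegrable (wJOE a b) volume (-1) 0 := by
  have hr : IntervalIntegrable (fun t : ℝ ↦ (1 + t) ^ ((b - 1) / 2)) volume (-1) 0 := by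
    simpa using (intervalIntegral.intervalIntegrable_rpow' (a := 0) (b := 1)
      (r := (b - 1) / 2) (by linarith)).comp_add_left 1
  refine hr.continuousOn_mul (g := fun t : ℝ ↦ (1 - t) ^ ((a - 1) / 2)) ?_
  refine ContinuousOn.rpow_const (by fun_prop) fun t ht ↦ .inl ?_
  rw [Set.uIcc_of_le (by norm_num)] at ht
  linarith [ht.2]

lemma intervalIntegrable_wJOE (ha : -1 < a) (hb : -1 < b) :
    IntervalIntegrable (wJOE a b) volume (-1) 1 := by
  refine (intervalIntegrable_wJOE_left a hb).trans ?_
  simpa [wJOE_neg] using (intervalIntegrable_wJOE_left b ha).comp_sub_left 0 |>.symm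

end Weight

section Kernel

variable {a b x : ℝ}

lemma hasDerivAt_wJOE_add_two_mul_jacobiMonic (ha : -1 < a) (hb : -1 < b) (hab : a + b ≠ -1)
    (n : ℕ) {t : ℝ} (ht : t ∈ Set.Ioo (-1 : ℝ) 1) :
    HasDerivAt (fun t ↦ wJOE (a + 2) (b + 2) t * jacobiMonic a b n t)
      (-((a + b + 2 * n + 2) / 2) * (jacobiSkew a b n t * wJOE a b t)) t := by
  refine ((hasDerivAt_wJOE_add_two ht).mul
    (differentiable_jacobiMonic a b n t).hasDerivAt).congr_deriv ?_
  rw [wJOE_add_two_eq_mul ht]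
  linear_combination wJOE a b t * one_sub_sq_mul_deriv_jacobiMonic ha hb hab n t

lemma jacobiNorm_ne_zero (ha : -1 < a) (hb : -1 < b) (hab : a + b ≠ -1) (n : ℕ) :
    jacobiNorm a b n ≠ 0 := by
  have hn : a + b + 2 * n + 2 ≠ 0 := by linarith [n.cast_nonneg (α := ℝ)]
  have h := mul_ne_zero hn (skewNorm_ne_zero ha hb hab n)
  rw [← two_mul_jacobiNorm ha hb] at h
  exact right_ne_zero_of_mul h

lemma intervalIntegrable_mul_wJOE (ha : -1 < a) (hb : -1 < b) {f : ℝ → ℝ} (hf : Continuous f) :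
    IntervalIntegrable (fun t ↦ f t * wJOE a b t) volume (-1) 1 :=
  (intervalIntegrable_wJOE ha hb).continuousOn_mul hf.continuousOn

lemma halfSignIntegral_jacobiSkew_div_skewNorm (ha : -1 < a) (hb : -1 < b) (hab : a + b ≠ -1)
    (n : ℕ) (hx : x ∈ Set.Icc (-1 : ℝ) 1) :
    halfSignIntegral (fun t ↦ jacobiSkew a b n t * wJOE a b t) x / skewNorm a b n =
      -(wJOE (a + 2) (b + 2) x * jacobiMonic a b n x / jacobiNorm a b n) := by
  have hs : a + b + 2 * n + 2 ≠ 0 := by linarith [n.cast_nonneg (α := ℝ)]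
  have hρ := skewNorm_ne_zero ha hb hab n
  have hh := jacobiNorm_ne_zero ha hb hab n
  have hcont := ((continuous_wJOE_add_two ha.le hb.le).mul
    (differentiable_jacobiMonic a b n).continuous).const_mul (-2 / (a + b + 2 * n + 2))
  rw [halfSignIntegral_eq_of_hasDerivAt hcont.continuousOn (fun t ht ↦
      ((hasDerivAt_wJOE_add_two_mul_jacobiMonic ha hb hab n ht).const_mul _).congr_deriv ?_)
      (intervalIntegrable_mul_wJOE ha hb (continuous_jacobiSkew a b n)) hx]
  · simp only [Pi.mul_apply, wJOE_add_two_one ha, wJOE_add_two_neg_one hb]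
    field_simp
    linear_combination -wJOE (a + 2) (b + 2) x * jacobiMonic a b n x * two_mul_jacobiNorm ha hb n
  · field_simp

/-- The transform `Φ_n` of `p_n w̃` by `halfSignIntegral`; it extends `Φ̃_{2k} = Φ_{2k}` to all
degrees. -/
noncomputable def jacobiPhi (a b : ℝ) (n : ℕ) : ℝ → ℝ :=
  halfSignIntegral fun t ↦ jacobiMonic a b n t * wJOE a b t

lemma jacobiPhi_add_two_div_skewNorm
    (ha : -1 < a) (hb : -1 < b) (hab : a + b ≠ -1) (n : ℕ) (hx : x ∈ Set.Icc (-1 : ℝ) 1) :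
    jacobiPhi a b (n + 2) x / skewNorm a b (n + 1) =
      jacobiPhi a b n x / skewNorm a b n -
        wJOE (a + 2) (b + 2) x * jacobiMonic a b (n + 1) x / jacobiNorm a b (n + 1) := by
  have hint (k : ℕ) := intervalIntegrable_mul_wJOE ha hb
    (differentiable_jacobiMonic a b k).continuous
  have hskew : (fun t ↦ jacobiSkew a b (n + 1) t * wJOE a b t) = fun t ↦
      jacobiMonic a b (n + 2) t * wJOE a b t -
        skewNorm a b (n + 1) / skewNorm a b n * (jacobiMonic a b n t * wJOE a b t) := by
    funext t
    rw [jacobiSkew]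
    ring
  have h := halfSignIntegral_jacobiSkew_div_skewNorm ha hb hab (n + 1) hx
  rw [hskew, halfSignIntegral_sub_const_mul (hint _) (hint _) hx, sub_div, mul_div_right_comm,
    div_div_cancel_left' (skewNorm_ne_zero ha hb hab (n + 1)), ← div_eq_inv_mul] at h
  rw [jacobiPhi, jacobiPhi]
  linear_combination h

lemma PhiJOE_two_mul (a b : ℝ) (k : ℕ) : PhiJOE a b (2 * k) = jacobiPhi a b (2 * k) := by
  funext x
  simp only [PhiJOE, jacobiPhi, halfSignIntegral, qJOE_two_mul, mul_assoc]

lemma PhiJOE_two_mul_add_one (ha : -1 < a) (hb : -1 < b) (hab : a + b ≠ -1) (k : ℕ) :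
    PhiJOE a b (2 * k + 1) =
      halfSignIntegral fun t ↦ jacobiSkew a b (2 * k) t * wJOE a b t := by
  funext x
  simp only [PhiJOE, halfSignIntegral, qJOE_two_mul_add_one ha hb hab, mul_assoc]

lemma joe_kernel_term_div_rJOE (ha : -1 < a) (hb : -1 < b) (hab : a + b ≠ -1)
    (k : ℕ) (hx : x ∈ Set.Icc (-1 : ℝ) 1) (y : ℝ) :
    (PhiJOE a b (2 * k) x * qJOE a b (2 * k + 1) y -
        PhiJOE a b (2 * k + 1) x * qJOE a b (2 * k) y) / rJOE a b k =
      jacobiPhi a b (2 * k) x * jacobiSkew a b (2 * k) y / skewNorm a b (2 * k) +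
        wJOE (a + 2) (b + 2) x *
          (jacobiMonic a b (2 * k) x * jacobiMonic a b (2 * k) y / jacobiNorm a b (2 * k)) := by
  rw [PhiJOE_two_mul, PhiJOE_two_mul_add_one ha hb hab, qJOE_two_mul,
    qJOE_two_mul_add_one ha hb hab, rJOE_eq_skewNorm]
  linear_combination -jacobiMonic a b (2 * k) y *
    halfSignIntegral_jacobiSkew_div_skewNorm ha hb hab (2 * k) hx

lemma sum_joe_kernel_term_div_rJOE (ha : -1 < a) (hb : -1 < b) (hab : a + b ≠ -1)
    (m : ℕ) (hx : x ∈ Set.Icc (-1 : ℝ) 1) (y : ℝ) :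
    ∑ k ∈ range (m + 1), (PhiJOE a b (2 * k) x * qJOE a b (2 * k + 1) y -
        PhiJOE a b (2 * k + 1) x * qJOE a b (2 * k) y) / rJOE a b k =
      wJOE (a + 2) (b + 2) x *
          ∑ l ∈ range (2 * m + 1), jacobiMonic a b l x * jacobiMonic a b l y / jacobiNorm a b l +
        jacobiPhi a b (2 * m) x * jacobiMonic a b (2 * m + 1) y / skewNorm a b (2 * m) := by
  induction m with
  | zero =>
    rw [sum_range_one, joe_kernel_term_div_rJOE ha hb hab 0 hx, sum_range_one, mul_zero,
      jacobiSkew]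
    ring
  | succ m ih =>
    have hρ := skewNorm_ne_zero ha hb hab (2 * m + 2)
    have hskew : jacobiSkew a b (2 * m + 2) y / skewNorm a b (2 * m + 2) =
        jacobiMonic a b (2 * m + 3) y / skewNorm a b (2 * m + 2) -
          jacobiMonic a b (2 * m + 1) y / skewNorm a b (2 * m + 1) := by
      rw [jacobiSkew]
      field_simp
    rw [sum_range_succ, ih, joe_kernel_term_div_rJOE ha hb hab (m + 1) hx, Nat.mul_add_one,
      sum_range_succ _ (2 * m + 2), sum_range_succ _ (2 * m + 1)]
    linear_combination jacobiPhi a b (2 * m + 2) x * hskew -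
      jacobiMonic a b (2 * m + 1) y * jacobiPhi_add_two_div_skewNorm ha hb hab (2 * m) hx

end Kernel

theorem joe_kernel_summation_general (a b : ℝ) (ha : -1 < a) (hb : -1 < b) (hab : a + b ≠ -1)
    (N : ℕ) (hN : 2 ≤ N) (hNeven : Even N)
    (x y : ℝ) (hx : x ∈ Set.Icc (-1 : ℝ) 1) (hy : y ∈ Set.Ioo (-1 : ℝ) 1) :
    ∑ k ∈ range (N / 2), (wJOE a b y / rJOE a b k) *
        (PhiJOE a b (2 * k) x * qJOE a b (2 * k + 1) y -
         PhiJOE a b (2 * k + 1) x * qJOE a b (2 * k) y)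
      = (1 - x) ^ ((a + 1) / 2) * (1 + x) ^ ((b + 1) / 2) *
          (1 - y) ^ ((a - 1) / 2) * (1 + y) ^ ((b - 1) / 2) *
          ∑ l ∈ range (N - 1), jacobiMonic a b l x * jacobiMonic a b l y / jacobiNorm a b l
        + ((2 * (N : ℝ) - 2 + a + b) / (2 * jacobiNorm a b (N - 2))) *
            wJOE a b y * jacobiMonic a b (N - 1) y *
            ((1 / 2) * ∫ t in Set.Ioo (-1 : ℝ) 1,
              Real.sign (x - t) * wJOE a b t * jacobiMonic a b (N - 2) t) := by
  obtain ⟨m, rfl⟩ : ∃ m, N = 2 * m + 2 := ⟨N / 2 - 1, by grind⟩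
  have hΦ : jacobiPhi a b (2 * m) x = (1 / 2) * ∫ t in Set.Ioo (-1 : ℝ) 1,
      Real.sign (x - t) * wJOE a b t * jacobiMonic a b (2 * m) t := by
    simp only [jacobiPhi, halfSignIntegral, mul_assoc, mul_comm (wJOE a b _)]
  have hρ : (skewNorm a b (2 * m))⁻¹ =
      (2 * ((2 * m + 2 : ℕ) : ℝ) - 2 + a + b) / (2 * jacobiNorm a b (2 * m)) := by
    rw [inv_skewNorm ha hb]
    push_cast
    ring
  have hsum := sum_joe_kernel_term_div_rJOE ha hb hab m hx y
  simp only [Nat.add_sub_cancel, show 2 * m + 2 - 1 = 2 * m + 1 from rfl,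
    show (2 * m + 2) / 2 = m + 1 by lia, ← hΦ, ← hρ]
  simp only [div_mul_comm (wJOE a b y), ← sum_mul]
  rw [hsum, wJOE_add_two, wJOE]
  ring

/-- Closed-form summation of the Jacobi orthogonal ensemble kernel `S̃₁(x,y)`
for `N` even. -/
theorem joe_kernel_summation (a b : ℝ) (ha : 0 < a) (hb : 0 < b)
    (N : ℕ) (hN : 2 ≤ N) (hNeven : Even N)
    (x y : ℝ) (hx : x ∈ Set.Ioo (-1 : ℝ) 1) (hy : y ∈ Set.Ioo (-1 : ℝ) 1) :
    ∑ k ∈ range (N / 2), (wJOE a b y / rJOE a b k) *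
        (PhiJOE a b (2 * k) x * qJOE a b (2 * k + 1) y -
         PhiJOE a b (2 * k + 1) x * qJOE a b (2 * k) y)
      = (1 - x) ^ ((a + 1) / 2) * (1 + x) ^ ((b + 1) / 2) *
          (1 - y) ^ ((a - 1) / 2) * (1 + y) ^ ((b - 1) / 2) *
          ∑ l ∈ range (N - 1), jacobiMonic a b l x * jacobiMonic a b l y / jacobiNorm a b l
        + ((2 * (N : ℝ) - 2 + a + b) / (2 * jacobiNorm a b (N - 2))) *
            wJOE a b y * jacobiMonic a b (N - 1) y *
            ((1 / 2) * ∫ t in Set.Ioo (-1 : ℝ) 1,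
              Real.sign (x - t) * wJOE a b t * jacobiMonic a b (N - 2) t) :=
  joe_kernel_summation_general a b (by linarith) (by linarith) (by linarith) N hN hNeven x y
    (Set.Ioo_subset_Icc_self hx) hy
end
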